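/- arXiv:2204.00580 — 2 statements merged into one kernel-verified Lean document; each statement's English description precedes it below -/
import Mathlib

section
/- (Uniformity of γ* with respect to the cost magnitude) Fix a class-K∞ function α and constants L > 0, r₀ > 0, δ > 0, d > 0, and set r := r₀ + 2δ + d. Then there exist t̄ > 0 and γ* > 0, depending only on α, L, r₀, δ, d (and in particular not on any upper bound for |h|), such that for EVERY smooth h : ℝ → ℝ having a unique global minimiser x* (h(x) > h(x*) for all x ≠ x*), satisfying |h(x₂) − h(x₁)| ≥ α(|x₂ − x₁|) whenever (x₁ − x*)(x₂ − x*) ≥ 0, and Lipschitz with constant L on [x* − r, x* + r], the following holds: for every γ ∈ (0, γ*) and every initial condition (x₀, ȳ₀) with |x₀ − x*| ≤ r₀ and |ȳ₀ − a₀δ(x₀)/2| ≤ γ*, every solution (x, ȳ) of the HPF-ES system ẋ(t) = −γ·(h(x(t) + δ sin(2πt)) − ȳ(t))·sin(2πt), ẏ̄(t) = γ·(h(x(t) + δ sin(2πt)) − ȳ(t)) with (x(0), ȳ(0)) = (x₀, ȳ₀) is bounded and satisfies |x(t) − x*| ≤ δ + d for all t ≥ t̄/γ. -/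
open Real MeasureTheory intervalIntegral Filter

/-- Zeroth Fourier coefficient of `t ↦ h (x + δ sin (2π t))`. -/
noncomputable def a0 (h : ℝ → ℝ) (δ x : ℝ) : ℝ :=
  2 * ∫ t in (0:ℝ)..1, h (x + δ * Real.sin (2 * Real.pi * t))

lemma hpf_sin_cont : Continuous (fun t : ℝ => Real.sin (2 * Real.pi * t)) := by fun_prop

lemma hpf_sin_int : ∫ t in (0:ℝ)..1, Real.sin (2 * Real.pi * t) = 0 := by
  rw [intervalIntegral.integral_comp_mul_left (fun u => Real.sin u) (by positivity)]
  simp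

/-- Behaviour of the solution over one period. -/
lemma hpf_one_period (h : ℝ → ℝ) (hc : Continuous h) (xs r L δ γ B C X Y : ℝ)
    (hL : 0 < L) (hδ : 0 < δ) (hγ : 0 < γ) (hC0 : 0 < C) (hC : B + L * δ + 1 = C)
    (hlip : ∀ u ∈ Set.Icc (xs - r) (xs + r), ∀ v ∈ Set.Icc (xs - r) (xs + r),
      |h u - h v| ≤ L * |u - v|)
    (hX : |X - xs| + C * γ + δ ≤ r) (hY : |Y - h X| ≤ B) (hsm : (L + 1) * C * γ < 1)
    (x y : ℝ → ℝ) (hx0 : x 0 = X) (hy0 : y 0 = Y)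
    (hx : ∀ t ∈ Set.Icc (0:ℝ) 1, HasDerivAt x
      (-γ * (h (x t + δ * Real.sin (2 * Real.pi * t)) - y t) * Real.sin (2 * Real.pi * t)) t)
    (hy : ∀ t ∈ Set.Icc (0:ℝ) 1, HasDerivAt y
      (γ * (h (x t + δ * Real.sin (2 * Real.pi * t)) - y t)) t) :
    (∀ t ∈ Set.Icc (0:ℝ) 1, |x t - X| ≤ C * γ ∧ |y t - Y| ≤ C * γ) ∧
    |x 1 - X + γ * ∫ t in (0:ℝ)..1, (h (X + δ * Real.sin (2 * Real.pi * t)) - h X)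
        * Real.sin (2 * Real.pi * t)| ≤ (L + 1) * C * γ * γ ∧
    |y 1 - Y - γ * ((∫ t in (0:ℝ)..1, (h (X + δ * Real.sin (2 * Real.pi * t)) - h X))
        + h X - Y)| ≤ (L + 1) * C * γ * γ := by
  have hCγ : 0 < C * γ := mul_pos hC0 hγ
  have habs := abs_le.1 (le_refl |X - xs|)
  -- basic Lipschitz estimates
  have key : ∀ s u : ℝ, |s| ≤ 1 → |u - X| ≤ C * γ →
      |h (u + δ * s) - h (X + δ * s)| ≤ L * (C * γ) := by
    intro s u hs hu
    have h1 := abs_le.1 hs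
    have h2 := abs_le.1 hu
    have := hlip (u + δ * s) ⟨by nlinarith, by nlinarith⟩ (X + δ * s)
      ⟨by nlinarith, by nlinarith⟩
    refine this.trans ?_
    have e : u + δ * s - (X + δ * s) = u - X := by ring
    rw [e]
    gcongr
  have key2 : ∀ s : ℝ, |s| ≤ 1 → |h (X + δ * s) - h X| ≤ L * δ := by
    intro s hs
    have h1 := abs_le.1 hs
    have := hlip (X + δ * s) ⟨by nlinarith, by nlinarith⟩ X ⟨by nlinarith, by nlinarith⟩
    refine this.trans ?_
    have e : X + δ * s - X = δ * s := by ring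
    rw [e, abs_mul, abs_of_pos hδ]
    have : δ * |s| ≤ δ := by nlinarith
    gcongr
  have hs1 : ∀ t : ℝ, |Real.sin (2 * Real.pi * t)| ≤ 1 := fun t => Real.abs_sin_le_one _
  have hcx : ContinuousOn x (Set.Icc 0 1) := fun t ht => (hx t ht).continuousAt.continuousWithinAt
  have hcy : ContinuousOn y (Set.Icc 0 1) := fun t ht => (hy t ht).continuousAt.continuousWithinAt
  have hboot : ∀ t ∈ Set.Icc (0:ℝ) 1, ‖((x t - X, y t - Y) : ℝ × ℝ)‖ ≤ C * γ * t := by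
    intro t ht
    refine image_norm_le_of_norm_deriv_right_lt_deriv_boundary'
      (f := fun t => ((x t - X, y t - Y) : ℝ × ℝ)) (a := 0) (b := 1)
      (f' := fun t => (-γ * (h (x t + δ * Real.sin (2 * Real.pi * t)) - y t)
        * Real.sin (2 * Real.pi * t), γ * (h (x t + δ * Real.sin (2 * Real.pi * t)) - y t)))
      (B := fun t => C * γ * t) (B' := fun _ => C * γ) ?_ ?_ ?_ ?_ ?_ ?_ ht
    · exact (hcx.sub continuousOn_const).prodMk (hcy.sub continuousOn_const)
    · intro t ht
      have ht' := Set.Ico_subset_Icc_self ht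
      exact (((hx t ht').sub_const X).hasDerivWithinAt).prodMk
        (((hy t ht').sub_const Y).hasDerivWithinAt)
    · simp [hx0, hy0]
    · fun_prop
    · intro t _
      simpa using ((hasDerivAt_id t).const_mul (C * γ)).hasDerivWithinAt
    · intro t ht hn
      have hle : ‖((x t - X, y t - Y) : ℝ × ℝ)‖ ≤ C * γ := by
        rw [hn]; nlinarith [ht.1, ht.2]
      rw [Prod.norm_def, max_le_iff] at hle
      simp only [Real.norm_eq_abs] at hle
      have k1 := abs_le.1 (key _ _ (hs1 t) hle.1)
      have k2 := abs_le.1 (key2 _ (hs1 t))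
      have k3 := abs_le.1 hle.2
      have k4 := abs_le.1 hY
      have he : |h (x t + δ * Real.sin (2 * Real.pi * t)) - y t| < C := by
        rw [abs_lt]; constructor <;> nlinarith
      have he' : γ * |h (x t + δ * Real.sin (2 * Real.pi * t)) - y t| < C * γ := by nlinarith
      rw [Prod.norm_def, max_lt_iff]
      simp only [Real.norm_eq_abs, abs_mul, abs_neg, abs_of_pos hγ]
      refine ⟨lt_of_le_of_lt ?_ he', he'⟩
      exact mul_le_of_le_one_right (by positivity) (hs1 t)
  have hA : ∀ t ∈ Set.Icc (0:ℝ) 1, |x t - X| ≤ C * γ ∧ |y t - Y| ≤ C * γ := by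
    intro t ht
    have hle : ‖((x t - X, y t - Y) : ℝ × ℝ)‖ ≤ C * γ :=
      (hboot t ht).trans (by nlinarith [ht.1, ht.2])
    rw [Prod.norm_def, max_le_iff] at hle
    simpa only [Real.norm_eq_abs] using hle
  have hE : ∀ t ∈ Set.Icc (0:ℝ) 1,
      |(h (x t + δ * Real.sin (2 * Real.pi * t)) - y t)
        - (h (X + δ * Real.sin (2 * Real.pi * t)) - Y)| ≤ (L + 1) * C * γ := by
    intro t ht
    have k1 := abs_le.1 (key _ _ (hs1 t) (hA t ht).1)
    have k3 := abs_le.1 (hA t ht).2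
    rw [abs_le]; constructor <;> nlinarith
  have hsc := hpf_sin_cont
  have hce : ContinuousOn (fun t => h (x t + δ * Real.sin (2 * Real.pi * t)) - y t)
      (Set.Icc 0 1) := by
    refine ContinuousOn.sub (hc.comp_continuousOn (hcx.add ?_)) hcy
    exact (by fun_prop : Continuous _).continuousOn
  have hcp : Continuous (fun t => h (X + δ * Real.sin (2 * Real.pi * t)) - h X) := by fun_prop
  have hu : Set.uIcc (0:ℝ) 1 = Set.Icc 0 1 := Set.uIcc_of_le zero_le_one
  have hI1 : IntervalIntegrable (fun t => -γ * (h (x t + δ * Real.sin (2 * Real.pi * t)) - y t)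
      * Real.sin (2 * Real.pi * t)) volume 0 1 := by
    refine ContinuousOn.intervalIntegrable ?_
    rw [hu]
    exact (continuousOn_const.mul hce).mul hsc.continuousOn
  have hI2 : IntervalIntegrable (fun t => γ * (h (x t + δ * Real.sin (2 * Real.pi * t)) - y t))
      volume 0 1 := by
    refine ContinuousOn.intervalIntegrable ?_
    rw [hu]
    exact continuousOn_const.mul hce
  have hJ1 : IntervalIntegrable (fun t => (h (X + δ * Real.sin (2 * Real.pi * t)) - h X)
      * Real.sin (2 * Real.pi * t)) volume 0 1 := (hcp.mul hsc).intervalIntegrable _ _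
  have hJ2 : IntervalIntegrable (fun t => (h (X + δ * Real.sin (2 * Real.pi * t)) - h X))
      volume 0 1 := hcp.intervalIntegrable _ _
  have hJ3 : IntervalIntegrable (fun t => Real.sin (2 * Real.pi * t)) volume 0 1 :=
    hsc.intervalIntegrable _ _
  have hxI := intervalIntegral.integral_eq_sub_of_hasDerivAt (fun t ht => hx t (hu ▸ ht)) hI1
  have hyI := intervalIntegral.integral_eq_sub_of_hasDerivAt (fun t ht => hy t (hu ▸ ht)) hI2
  rw [hx0] at hxI
  rw [hy0] at hyI
  refine ⟨hA, ?_, ?_⟩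
  · have e : x 1 - X + γ * ∫ t in (0:ℝ)..1, (h (X + δ * Real.sin (2 * Real.pi * t)) - h X)
        * Real.sin (2 * Real.pi * t)
        = ∫ t in (0:ℝ)..1, ((-γ * (h (x t + δ * Real.sin (2 * Real.pi * t)) - y t)
      * Real.sin (2 * Real.pi * t) + γ * ((h (X + δ * Real.sin (2 * Real.pi * t)) - h X)
      * Real.sin (2 * Real.pi * t))) + γ * (h X - Y) * Real.sin (2 * Real.pi * t)) := by
      rw [intervalIntegral.integral_add (hI1.add (hJ1.const_mul _)) (hJ3.const_mul _),
        intervalIntegral.integral_add hI1 (hJ1.const_mul _), hxI,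
        intervalIntegral.integral_const_mul, intervalIntegral.integral_const_mul, hpf_sin_int]
      ring
    rw [e]
    have := intervalIntegral.norm_integral_le_of_norm_le_const (a := 0) (b := 1)
      (C := (L + 1) * C * γ * γ) (f := fun t =>
      ((-γ * (h (x t + δ * Real.sin (2 * Real.pi * t)) - y t)
      * Real.sin (2 * Real.pi * t) + γ * ((h (X + δ * Real.sin (2 * Real.pi * t)) - h X)
      * Real.sin (2 * Real.pi * t))) + γ * (h X - Y) * Real.sin (2 * Real.pi * t))) ?_
    · simpa using this
    · intro t ht
      rw [Set.uIoc_of_le zero_le_one] at ht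
      have h1 := hE t (Set.Ioc_subset_Icc_self ht)
      have e2 : ((-γ * (h (x t + δ * Real.sin (2 * Real.pi * t)) - y t)
        * Real.sin (2 * Real.pi * t) + γ * ((h (X + δ * Real.sin (2 * Real.pi * t)) - h X)
        * Real.sin (2 * Real.pi * t))) + γ * (h X - Y) * Real.sin (2 * Real.pi * t))
        = (-(γ * Real.sin (2 * Real.pi * t))) * ((h (x t + δ * Real.sin (2 * Real.pi * t)) - y t)
        - (h (X + δ * Real.sin (2 * Real.pi * t)) - Y)) := by ring
      rw [e2, Real.norm_eq_abs, abs_mul, abs_neg, abs_mul, abs_of_pos hγ]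
      have : γ * |Real.sin (2 * Real.pi * t)| ≤ γ := by nlinarith [hs1 t]
      calc _ ≤ γ * ((L + 1) * C * γ) := by gcongr
        _ = _ := by ring
  · have e : y 1 - Y - γ * ((∫ t in (0:ℝ)..1, (h (X + δ * Real.sin (2 * Real.pi * t)) - h X))
        + h X - Y)
        = ∫ t in (0:ℝ)..1, ((γ * (h (x t + δ * Real.sin (2 * Real.pi * t)) - y t)
        - γ * (h (X + δ * Real.sin (2 * Real.pi * t)) - h X)) - γ * (h X - Y)) := by
      rw [intervalIntegral.integral_sub (hI2.sub (hJ2.const_mul _)) (by simp),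
        intervalIntegral.integral_sub hI2 (hJ2.const_mul _), hyI,
        intervalIntegral.integral_const_mul, intervalIntegral.integral_const]
      simp
      ring
    rw [e]
    have := intervalIntegral.norm_integral_le_of_norm_le_const (a := 0) (b := 1)
      (C := (L + 1) * C * γ * γ) (f := fun t =>
      ((γ * (h (x t + δ * Real.sin (2 * Real.pi * t)) - y t)
        - γ * (h (X + δ * Real.sin (2 * Real.pi * t)) - h X)) - γ * (h X - Y))) ?_
    · simpa using this
    · intro t ht
      rw [Set.uIoc_of_le zero_le_one] at ht
      have h1 := hE t (Set.Ioc_subset_Icc_self ht)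
      have e2 : ((γ * (h (x t + δ * Real.sin (2 * Real.pi * t)) - y t)
        - γ * (h (X + δ * Real.sin (2 * Real.pi * t)) - h X)) - γ * (h X - Y))
        = γ * ((h (x t + δ * Real.sin (2 * Real.pi * t)) - y t)
        - (h (X + δ * Real.sin (2 * Real.pi * t)) - Y)) := by ring
      rw [e2, Real.norm_eq_abs, abs_mul, abs_of_pos hγ]
      calc _ ≤ γ * ((L + 1) * C * γ) := by gcongr
        _ = _ := by ring

/-- `h` is strictly increasing to the right of the minimiser. -/
lemma hpf_mono_right (h : ℝ → ℝ) (hc : Continuous h) (xs : ℝ)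
    (hmin : ∀ x, x ≠ xs → h xs < h x)
    (hinj : ∀ a b, xs ≤ a → a < b → h a ≠ h b) (a b : ℝ) (ha : xs ≤ a) (hab : a ≤ b) :
    h a ≤ h b := by
  by_contra hlt
  push Not at hlt
  have hne : a ≠ b := by rintro rfl; exact lt_irrefl _ hlt
  have hab' : a < b := lt_of_le_of_ne hab hne
  have hb := hmin b (by linarith [lt_of_le_of_lt ha hab'] |> fun (h : xs < b) => ne_of_gt h)
  obtain ⟨z, hz, hzb⟩ := intermediate_value_Icc ha hc.continuousOn
    (⟨hb.le, hlt.le⟩ : h b ∈ Set.Icc (h xs) (h a))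
  exact hinj z b hz.1 (lt_of_le_of_lt hz.2 hab') hzb

lemma hpf_mono_left (h : ℝ → ℝ) (hc : Continuous h) (xs : ℝ)
    (hmin : ∀ x, x ≠ xs → h xs < h x)
    (hinj : ∀ a b, b ≤ xs → a < b → h a ≠ h b) (a b : ℝ) (hb : b ≤ xs) (hab : a ≤ b) :
    h b ≤ h a := by
  have := hpf_mono_right (fun x => h (-x)) (by fun_prop) (-xs)
    (fun x hx => by
      simp only [neg_neg]
      exact hmin _ (fun hh => hx (by linarith)))
    (fun p q hp hpq => (hinj (-q) (-p) (by linarith) (by linarith)).symm) (-b) (-a)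
    (by linarith) (by linarith)
  simpa using this

set_option maxHeartbeats 4000000 in
/-- Uniformity of `γ*` with respect to the cost magnitude. -/
theorem hpf_es_gamma_uniform_in_cost
    (α : ℝ → ℝ) (hα_cont : ContinuousOn α (Set.Ici 0))
    (hα_mono : StrictMonoOn α (Set.Ici 0)) (hα0 : α 0 = 0)
    (hα_top : Tendsto α atTop atTop)
    (L r₀ δ d : ℝ) (hL : 0 < L) (hr₀ : 0 < r₀) (hδ : 0 < δ) (hd : 0 < d) :
    ∃ tbar γstar : ℝ, 0 < tbar ∧ 0 < γstar ∧
      ∀ h : ℝ → ℝ, ContDiff ℝ (⊤ : ℕ∞) h →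
        ∀ xstar : ℝ, (∀ x : ℝ, x ≠ xstar → h xstar < h x) →
          (∀ x₁ x₂ : ℝ, (x₁ - xstar) * (x₂ - xstar) ≥ 0 → α |x₂ - x₁| ≤ |h x₂ - h x₁|) →
          (∀ u ∈ Set.Icc (xstar - (r₀ + 2 * δ + d)) (xstar + (r₀ + 2 * δ + d)),
            ∀ v ∈ Set.Icc (xstar - (r₀ + 2 * δ + d)) (xstar + (r₀ + 2 * δ + d)),
              |h u - h v| ≤ L * |u - v|) →
          ∀ γ : ℝ, γ ∈ Set.Ioo 0 γstar →
            ∀ x₀ ybar₀ : ℝ, |x₀ - xstar| ≤ r₀ → |ybar₀ - a0 h δ x₀ / 2| ≤ γstar →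
              ∀ x ybar : ℝ → ℝ, Differentiable ℝ x → Differentiable ℝ ybar →
                x 0 = x₀ → ybar 0 = ybar₀ →
                (∀ t : ℝ, 0 ≤ t →
                  HasDerivAt x
                    (-γ * (h (x t + δ * Real.sin (2 * Real.pi * t)) - ybar t)
                      * Real.sin (2 * Real.pi * t)) t) →
                (∀ t : ℝ, 0 ≤ t →
                  HasDerivAt ybar
                    (γ * (h (x t + δ * Real.sin (2 * Real.pi * t)) - ybar t)) t) →
                (∃ M : ℝ, ∀ t : ℝ, 0 ≤ t → |x t| ≤ M ∧ |ybar t| ≤ M) ∧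
                (∀ t : ℝ, tbar / γ ≤ t → |x t - xstar| ≤ δ + d) := by
  have hαnn : ∀ s, 0 ≤ s → 0 ≤ α s := by
    intro s hs
    rw [← hα0]
    exact hα_mono.monotoneOn (Set.mem_Ici.2 le_rfl) (Set.mem_Ici.2 hs) hs
  have hαpos : ∀ s, 0 < s → 0 < α s := by
    intro s hs
    rw [← hα0]
    exact hα_mono (Set.mem_Ici.2 le_rfl) (Set.mem_Ici.2 hs.le) hs
  have hsc := hpf_sin_cont
  have hs1 : ∀ t : ℝ, |Real.sin (2 * Real.pi * t)| ≤ 1 := fun t => Real.abs_sin_le_one _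
  have hαc : Continuous (fun t : ℝ => α (δ * |Real.sin (2 * Real.pi * t)|)
      * |Real.sin (2 * Real.pi * t)|) := by
    refine Continuous.mul ?_ (by fun_prop)
    exact hα_cont.comp_continuous (by fun_prop) (fun t => Set.mem_Ici.2 (by positivity))
  obtain ⟨c, hcdef⟩ : ∃ c, c = ∫ t in (0:ℝ)..1, α (δ * |Real.sin (2 * Real.pi * t)|)
      * |Real.sin (2 * Real.pi * t)| := ⟨_, rfl⟩
  have hcpos : 0 < c := by
    rw [hcdef]
    refine intervalIntegral.integral_pos zero_lt_one hαc.continuousOn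
      (fun t _ => mul_nonneg (hαnn _ (by positivity)) (abs_nonneg _)) ⟨1/4, by norm_num, ?_⟩
    have : Real.sin (2 * Real.pi * (1/4)) = 1 := by
      rw [show 2 * Real.pi * (1/4) = Real.pi / 2 by ring, Real.sin_pi_div_two]
    rw [this]
    simpa using hαpos δ hδ
  obtain ⟨B, hB⟩ : ∃ B, B = L * δ + L * (L * δ) + 1 := ⟨_, rfl⟩
  obtain ⟨C, hC⟩ : ∃ C, C = B + L * δ + 1 := ⟨_, rfl⟩
  have hBpos : 0 < B := by rw [hB]; positivity
  have hCpos : 0 < C := by rw [hC]; positivity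
  obtain ⟨K, hK⟩ : ∃ K, K = (L + 1) * C := ⟨_, rfl⟩
  have hKpos : 0 < K := by rw [hK]; positivity
  obtain ⟨G, hG⟩ : ∃ G, G = min 1 (min (1 / ((L + 1) * K)) (min (d / 2 / C)
    (min (δ / C) (c / 2 / K)))) := ⟨_, rfl⟩
  have hGpos : 0 < G := by rw [hG]; positivity
  have hG1 : G ≤ 1 := by rw [hG]; exact min_le_left _ _
  refine ⟨2 * r₀ / c + 1, G, by positivity, hGpos, ?_⟩
  intro h hsmooth xs hmin hα hlip γ hγG x₀ y₀ hx₀ hy₀ x y _ _ hxi hyi hx hy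
  obtain ⟨hγ, hγG⟩ := hγG
  have hγ1 : γ < 1 := hγG.trans_le hG1
  have hγ2 : γ * ((L + 1) * K) < 1 := by
    rw [← lt_div_iff₀ (by positivity)]
    exact hγG.trans_le (by rw [hG]; exact (min_le_right _ _).trans (min_le_left _ _))
  have hγ3 : γ * C < d / 2 := by
    rw [← lt_div_iff₀ (by positivity)]
    exact hγG.trans_le (by
      rw [hG]; exact (min_le_right _ _).trans ((min_le_right _ _).trans (min_le_left _ _)))
  have hγ4 : γ * C < δ := by
    rw [← lt_div_iff₀ (by positivity)]
    exact hγG.trans_le (by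
      rw [hG]
      exact (min_le_right _ _).trans ((min_le_right _ _).trans ((min_le_right _ _).trans
        (min_le_left _ _))))
  have hγ5 : γ * K < c / 2 := by
    rw [← lt_div_iff₀ (by positivity)]
    exact hγG.trans_le (by
      rw [hG]
      exact (min_le_right _ _).trans ((min_le_right _ _).trans ((min_le_right _ _).trans
        (min_le_right _ _))))
  have hγK : γ * K < 1 := by nlinarith [mul_pos hγ hKpos, mul_pos (mul_pos hγ hKpos) hL]
  have hsm : (L + 1) * C * γ < 1 := by rw [← hK]; linarith
  have hc : Continuous h := hsmooth.continuous
  have hinjR : ∀ a b, xs ≤ a → a < b → h a ≠ h b := by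
    intro a b ha hab he
    have := hα a b (mul_nonneg (by linarith) (by linarith))
    rw [he, sub_self, abs_zero] at this
    have := hαpos |b - a| (abs_pos.2 (by linarith))
    linarith
  have hinjL : ∀ a b, b ≤ xs → a < b → h a ≠ h b := by
    intro a b ha hab he
    have := hα a b (mul_nonneg_of_nonpos_of_nonpos (by linarith) (by linarith))
    rw [he, sub_self, abs_zero] at this
    have := hαpos |b - a| (abs_pos.2 (by linarith))
    linarith
  have hmR := hpf_mono_right h hc xs hmin hinjR
  have hmL := hpf_mono_left h hc xs hmin hinjL
  have hint : ∀ X : ℝ, IntervalIntegrable (fun t => (h (X + δ * Real.sin (2 * Real.pi * t)) - h X)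
      * Real.sin (2 * Real.pi * t)) volume 0 1 := fun X =>
    (by fun_prop : Continuous _).intervalIntegrable _ _
  -- drift estimates
  have driftR : ∀ X, xs + δ ≤ X → c ≤ ∫ t in (0:ℝ)..1,
      (h (X + δ * Real.sin (2 * Real.pi * t)) - h X) * Real.sin (2 * Real.pi * t) := by
    intro X hX
    rw [hcdef]
    refine intervalIntegral.integral_mono_on zero_le_one (hαc.intervalIntegrable _ _) (hint X) ?_
    intro t _
    have h1 := abs_le.1 (hs1 t)
    generalize Real.sin (2 * Real.pi * t) = s at h1 ⊢
    have h2 := hα X (X + δ * s) (mul_nonneg (by linarith) (by nlinarith))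
    rw [add_sub_cancel_left, abs_mul, abs_of_pos hδ] at h2
    rcases le_total 0 s with hs | hs
    · have h3 := hmR X (X + δ * s) (by linarith) (by nlinarith)
      rw [abs_of_nonneg (sub_nonneg.2 h3)] at h2
      rw [abs_of_nonneg hs] at h2 ⊢
      exact mul_le_mul_of_nonneg_right h2 hs
    · have h3 := hmR (X + δ * s) X (by nlinarith) (by nlinarith)
      rw [abs_of_nonpos (sub_nonpos.2 h3)] at h2
      rw [abs_of_nonpos hs] at h2 ⊢
      nlinarith
  have driftL : ∀ X, X ≤ xs - δ → (∫ t in (0:ℝ)..1,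
      (h (X + δ * Real.sin (2 * Real.pi * t)) - h X) * Real.sin (2 * Real.pi * t)) ≤ -c := by
    intro X hX
    rw [hcdef, ← intervalIntegral.integral_neg]
    refine intervalIntegral.integral_mono_on zero_le_one (hint X)
      (hαc.neg.intervalIntegrable _ _) ?_
    intro t _
    have h1 := abs_le.1 (hs1 t)
    generalize Real.sin (2 * Real.pi * t) = s at h1 ⊢
    have h2 := hα X (X + δ * s) (mul_nonneg_of_nonpos_of_nonpos (by linarith) (by nlinarith))
    rw [add_sub_cancel_left, abs_mul, abs_of_pos hδ] at h2
    rcases le_total 0 s with hs | hs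
    · have h3 := hmL X (X + δ * s) (by nlinarith) (by nlinarith)
      rw [abs_of_nonpos (sub_nonpos.2 h3)] at h2
      rw [abs_of_nonneg hs] at h2 ⊢
      nlinarith
    · have h3 := hmL (X + δ * s) X (by nlinarith) (by nlinarith)
      rw [abs_of_nonneg (sub_nonneg.2 h3)] at h2
      rw [abs_of_nonpos hs] at h2 ⊢
      nlinarith
  have hdiff : ∀ X, |X - xs| ≤ r₀ + δ + d → ∀ t : ℝ,
      |h (X + δ * Real.sin (2 * Real.pi * t)) - h X| ≤ L * δ := by
    intro X hX t
    have h1 := abs_le.1 (hs1 t)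
    have h0 := hs1 t
    generalize Real.sin (2 * Real.pi * t) = s at h1 h0 ⊢
    have h2 := abs_le.1 hX
    refine (hlip (X + δ * s) ⟨by nlinarith, by nlinarith⟩ X ⟨by linarith, by linarith⟩).trans ?_
    rw [add_sub_cancel_left, abs_mul, abs_of_pos hδ]
    have : δ * |s| ≤ δ := by nlinarith
    gcongr
  have hI0 : ∀ X, |X - xs| ≤ r₀ + δ + d →
      |∫ t in (0:ℝ)..1, (h (X + δ * Real.sin (2 * Real.pi * t)) - h X)| ≤ L * δ := by
    intro X hX
    have := intervalIntegral.norm_integral_le_of_norm_le_const (a := 0) (b := 1)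
      (C := L * δ) (f := fun t => (h (X + δ * Real.sin (2 * Real.pi * t)) - h X))
      (fun t _ => hdiff X hX t)
    simpa using this
  have hI1 : ∀ X, |X - xs| ≤ r₀ + δ + d →
      |∫ t in (0:ℝ)..1, (h (X + δ * Real.sin (2 * Real.pi * t)) - h X)
        * Real.sin (2 * Real.pi * t)| ≤ L * δ := by
    intro X hX
    have := intervalIntegral.norm_integral_le_of_norm_le_const (a := 0) (b := 1)
      (C := L * δ) (f := fun t => (h (X + δ * Real.sin (2 * Real.pi * t)) - h X)
        * Real.sin (2 * Real.pi * t))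
      (fun t _ => by
        rw [Real.norm_eq_abs, abs_mul]
        calc _ ≤ L * δ * 1 := by
              gcongr
              · exact hdiff X hX t
              · exact hs1 t
          _ = _ := mul_one _)
    simpa using this
  -- the one-period estimate, on the n-th period
  have per : ∀ n : ℕ, |x n - xs| ≤ r₀ + δ + d / 2 → |y n - h (x n)| ≤ B →
    (∀ t ∈ Set.Icc (0:ℝ) 1, |x (t + n) - x n| ≤ C * γ ∧ |y (t + n) - y n| ≤ C * γ) ∧
    |x (n + 1 : ℕ) - x n + γ * ∫ t in (0:ℝ)..1,
      (h (x n + δ * Real.sin (2 * Real.pi * t)) - h (x n))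
        * Real.sin (2 * Real.pi * t)| ≤ K * γ * γ ∧
    |y (n + 1 : ℕ) - y n - γ * ((∫ t in (0:ℝ)..1,
      (h (x n + δ * Real.sin (2 * Real.pi * t)) - h (x n)))
        + h (x n) - y n)| ≤ K * γ * γ := by
    intro n h1 h2
    have hsn : ∀ t : ℝ, Real.sin (2 * Real.pi * (t + n)) = Real.sin (2 * Real.pi * t) := by
      intro t
      rw [show 2 * Real.pi * (t + n) = 2 * Real.pi * t + n * (2 * Real.pi) by ring]
      exact Real.sin_add_nat_mul_two_pi _ _
    have := hpf_one_period h hc xs (r₀ + 2 * δ + d) L δ γ B C (x n) (y n) hL hδ hγ hCpos hC.symm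
      hlip (by linarith) h2 hsm (fun t => x (t + n)) (fun t => y (t + n)) (by simp) (by simp)
      (fun t ht => by
        have := (hx (t + n) (add_nonneg ht.1 n.cast_nonneg)).comp_add_const t (n : ℝ)
        simpa only [hsn] using this)
      (fun t ht => by
        have := (hy (t + n) (add_nonneg ht.1 n.cast_nonneg)).comp_add_const t (n : ℝ)
        simpa only [hsn] using this)
    rw [hK]
    have e : ((n + 1 : ℕ) : ℝ) = 1 + n := by push_cast; ring
    rw [e]
    exact this
  -- the induction over periods
  have main : ∀ n : ℕ, |x n - xs| ≤ max (δ + d / 2) (r₀ - n * (γ * (c / 2)))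
      ∧ |y n - h (x n)| ≤ B := by
    intro n
    induction n with
    | zero =>
      simp only [Nat.cast_zero, zero_mul, sub_zero, hxi, hyi]
      refine ⟨hx₀.trans (le_max_right _ _), ?_⟩
      have h1 := hI0 x₀ (by linarith)
      rw [intervalIntegral.integral_sub ((by fun_prop : Continuous _).intervalIntegrable _ _)
        (by simp)] at h1
      have h2 : a0 h δ x₀ / 2 = ∫ t in (0:ℝ)..1, h (x₀ + δ * Real.sin (2 * Real.pi * t)) := by
        unfold a0; ring
      rw [h2] at hy₀
      simp only [intervalIntegral.integral_const, sub_zero, smul_eq_mul, one_mul] at h1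
      have h3 := abs_le.1 h1
      have h4 := abs_le.1 hy₀
      have : 0 < L * (L * δ) := by positivity
      rw [abs_le]; constructor <;> linarith
    | succ n ih =>
      obtain ⟨ih1, ih2⟩ := ih
      have hnn : 0 ≤ (n:ℝ) * (γ * (c / 2)) := by positivity
      have hR : |x n - xs| ≤ r₀ + δ + d / 2 :=
        ih1.trans (max_le (by linarith) (by linarith))
      obtain ⟨p1, p2, p3⟩ := per n hR ih2
      have p0 := (p1 1 ⟨zero_le_one, le_rfl⟩).1
      have e : (1:ℝ) + n = ((n + 1 : ℕ) : ℝ) := by push_cast; ring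
      rw [e] at p0
      have b0 := hI0 (x n) (by linarith)
      have b1 := hI1 (x n) (by linarith)
      have dR := driftR (x n)
      have dL := driftL (x n)
      generalize (∫ t in (0:ℝ)..1, (h (x n + δ * Real.sin (2 * Real.pi * t)) - h (x n))
        * Real.sin (2 * Real.pi * t)) = I1 at p2 b1 dR dL
      generalize (∫ t in (0:ℝ)..1, (h (x n + δ * Real.sin (2 * Real.pi * t)) - h (x n)))
        = I0 at p3 b0
      have ec : ((n + 1 : ℕ) : ℝ) * (γ * (c / 2)) = n * (γ * (c / 2)) + γ * (c / 2) := by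
        push_cast; ring
      rw [ec]
      generalize x ((n + 1 : ℕ) : ℝ) = x1 at *
      generalize y ((n + 1 : ℕ) : ℝ) = y1 at *
      have q0 := abs_le.1 p0
      have q2 := abs_le.1 p2
      have q3 := abs_le.1 p3
      have qR := abs_le.1 hR
      have hKγ : K * γ * γ ≤ γ * (c / 2) := by nlinarith
      have hγc : 0 < γ * (c / 2) := by positivity
      have main1 : |x1 - xs| ≤ δ + d / 2 ∨ |x1 - xs| ≤ |x n - xs| - γ * (c / 2) := by
        rcases le_total (xs + δ) (x n) with hr | hr
        · right
          have := mul_le_mul_of_nonneg_left (dR hr) hγ.le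
          rw [abs_of_nonneg (by linarith : 0 ≤ x1 - xs), abs_of_nonneg (by linarith)]
          linarith
        · rcases le_total (x n) (xs - δ) with hl | hl
          · right
            have := mul_le_mul_of_nonneg_left (dL hl) hγ.le
            rw [abs_of_nonpos (by linarith : x1 - xs ≤ 0), abs_of_nonpos (by linarith)]
            linarith
          · left
            rw [abs_le]; constructor <;> linarith
      refine ⟨?_, ?_⟩
      · rcases main1 with m | m
        · exact m.trans (le_max_left _ _)
        · rcases le_max_iff.1 ih1 with k | k
          · exact le_max_of_le_left (by linarith)
          · exact le_max_of_le_right (by linarith)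
      · have hl : |h x1 - h (x n)| ≤ L * |x1 - x n| :=
          hlip _ ⟨by linarith, by linarith⟩ _ ⟨by linarith, by linarith⟩
        have hb1 : |x1 - x n| ≤ γ * (L * δ) + K * γ * γ := by
          have q1 := abs_le.1 b1
          have u1 := mul_le_mul_of_nonneg_left q1.1 hγ.le
          have u2 := mul_le_mul_of_nonneg_left q1.2 hγ.le
          rw [abs_le]; constructor <;> linarith
        have hl2 := abs_le.1 (hl.trans (mul_le_mul_of_nonneg_left hb1 hL.le))
        have q4 := abs_le.1 b0
        have v1 := mul_le_mul_of_nonneg_left q4.1 hγ.le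
        have v2 := mul_le_mul_of_nonneg_left q4.2 hγ.le
        have q5 := abs_le.1 ih2
        have w1 := mul_le_mul_of_nonneg_left q5.1 (by linarith : 0 ≤ 1 - γ)
        have w2 := mul_le_mul_of_nonneg_left q5.2 (by linarith : 0 ≤ 1 - γ)
        have z := mul_le_mul_of_nonneg_left hγ2.le hγ.le
        have eB : γ * B = γ * (L * δ) + γ * (L * (L * δ)) + γ := by rw [hB]; ring
        rw [abs_le]; constructor <;> nlinarith
  -- conclusion
  have cont : ∀ t : ℝ, 0 ≤ t → |x t - x ⌊t⌋₊| ≤ C * γ ∧ |y t - y ⌊t⌋₊| ≤ C * γ := by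
    intro t ht
    have hnn : 0 ≤ (⌊t⌋₊:ℝ) * (γ * (c / 2)) := by positivity
    have := (per ⌊t⌋₊ ((main _).1.trans (max_le (by linarith) (by linarith))) (main _).2).1
      (t - ⌊t⌋₊) ⟨by linarith [Nat.floor_le ht], by linarith [Nat.lt_floor_add_one t]⟩
    simpa using this
  constructor
  · refine ⟨|xs| + |h xs| + (r₀ + δ + d) + L * (r₀ + δ + d) + B + d, ?_⟩
    intro t ht
    obtain ⟨c1, c2⟩ := cont t ht
    obtain ⟨m1, m2⟩ := main ⌊t⌋₊
    have hnn : 0 ≤ (⌊t⌋₊:ℝ) * (γ * (c / 2)) := by positivity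
    have m1' : |x ⌊t⌋₊ - xs| ≤ r₀ + δ + d := m1.trans (max_le (by linarith) (by linarith))
    generalize x ((⌊t⌋₊ : ℕ) : ℝ) = X at *
    generalize y ((⌊t⌋₊ : ℕ) : ℝ) = Y at *
    have g1 := abs_le.1 c1
    have g2 := abs_le.1 c2
    have g3 := abs_le.1 m2
    have g4 := abs_le.1 m1'
    have g5 := abs_le.1 ((hlip X ⟨by linarith, by linarith⟩ xs ⟨by linarith, by linarith⟩).trans
      (mul_le_mul_of_nonneg_left m1' hL.le))
    have g6 := abs_le.1 (le_refl |xs|)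
    have g7 := abs_le.1 (le_refl |h xs|)
    have g8 : 0 < L * (r₀ + δ + d) := by positivity
    have g9 := abs_nonneg xs
    have g10 := abs_nonneg (h xs)
    constructor <;> rw [abs_le] <;> constructor <;> linarith
  · intro t ht
    have ht0 : 0 ≤ t := le_trans (by positivity) ht
    obtain ⟨c1, -⟩ := cont t ht0
    obtain ⟨m1, -⟩ := main ⌊t⌋₊
    have hfl := Nat.lt_floor_add_one t
    rw [div_le_iff₀ hγ] at ht
    have hlow : r₀ - (⌊t⌋₊:ℝ) * (γ * (c / 2)) ≤ 0 := by
      have k1 : 2 * r₀ / c ≤ (⌊t⌋₊:ℝ) * γ := by nlinarith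
      rw [div_le_iff₀ hcpos] at k1
      linarith
    have m2 : |x ⌊t⌋₊ - xs| ≤ δ + d / 2 := m1.trans (max_le le_rfl (by linarith))
    have g1 := abs_le.1 c1
    have g2 := abs_le.1 m2
    rw [abs_le]; constructor <;> linarith
end

section
/- (Oscillatory behaviour of the basic ES for large costs) Let J ⊆ ℝ be an open interval, h : ℝ → ℝ continuous with h(u) > 0 for all u ∈ J, and H : J → ℝ differentiable with H′(u) = 1/h(u) for all u ∈ J. If x₁ : [0,T] → J is differentiable and satisfies ẋ₁(t) = −γ·h(x₁(t))·sin(2πt) for all t ∈ [0,T], then H(x₁(t)) = H(x₁(0)) + (γ/(2π))·(cos(2πt) − 1) for all t ∈ [0,T]; in particular x₁(n) = x₁(0) for every natural number n with n ≤ T, i.e. the trajectory is a pure oscillation returning to its initial value at every period of the dither. -/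
open Real Filter

/-- Oscillatory behaviour of the basic ES for large costs: the support system
`ẋ₁ = -γ h(x₁) sin(2πt)` has purely oscillatory solutions, returning to the initial value at
every period of the dither. -/
theorem support_system_pure_oscillation
    (a b : ℝ) (h : ℝ → ℝ) (hc : Continuous h)
    (hpos : ∀ u ∈ Set.Ioo a b, 0 < h u)
    (H : ℝ → ℝ) (hH : ∀ u ∈ Set.Ioo a b, HasDerivAt H (1 / h u) u)
    (γ : ℝ) (hγ : 0 < γ) (T : ℝ) (hT : 0 ≤ T)
    (x₁ : ℝ → ℝ)
    (hmem : ∀ t ∈ Set.Icc 0 T, x₁ t ∈ Set.Ioo a b)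
    (hsol : ∀ t ∈ Set.Icc 0 T,
      HasDerivAt x₁ (-γ * h (x₁ t) * Real.sin (2 * Real.pi * t)) t) :
    (∀ t ∈ Set.Icc 0 T,
      H (x₁ t) = H (x₁ 0) + γ / (2 * Real.pi) * (Real.cos (2 * Real.pi * t) - 1)) ∧
    (∀ n : ℕ, (n : ℝ) ≤ T → x₁ n = x₁ 0) := by
  have key : ∀ t ∈ Set.Icc 0 T,
      H (x₁ t) = H (x₁ 0) + γ / (2 * Real.pi) * (Real.cos (2 * Real.pi * t) - 1) := by
    have hd : ∀ t ∈ Set.Icc 0 T, HasDerivAt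
        (fun t => H (x₁ t) - γ / (2 * Real.pi) * Real.cos (2 * Real.pi * t)) 0 t := by
      intro t ht
      have h1 : HasDerivAt (fun t => H (x₁ t)) _ t :=
        (hH _ (hmem t ht)).comp t (hsol t ht)
      have h2 : HasDerivAt (fun t : ℝ => 2 * Real.pi * t) (2 * Real.pi * 1) t :=
        (hasDerivAt_id t).const_mul (2 * Real.pi)
      have h3 := h1.sub (h2.cos.const_mul (γ / (2 * Real.pi)))
      refine h3.congr_deriv ?_
      have hp := (hpos _ (hmem t ht)).ne'
      have hpi := Real.pi_ne_zero
      field_simp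
      ring
    intro t ht
    have := constant_of_has_deriv_right_zero
      (fun t ht => (hd t ht).continuousAt.continuousWithinAt)
      (fun t ht => (hd t (Set.Ico_subset_Icc_self ht)).hasDerivWithinAt) t ht
    simp only [mul_zero, Real.cos_zero] at this
    linarith
  refine ⟨key, fun n hn => ?_⟩
  have hmono : StrictMonoOn H (Set.Ioo a b) := by
    apply strictMonoOn_of_deriv_pos (convex_Ioo a b)
    · exact fun u hu => (hH u hu).continuousAt.continuousWithinAt
    · intro u hu
      rw [interior_Ioo] at hu
      rw [(hH u hu).deriv]
      exact one_div_pos.mpr (hpos u hu)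
  have hn' : (n : ℝ) ∈ Set.Icc 0 T := ⟨Nat.cast_nonneg n, hn⟩
  apply hmono.injOn (hmem _ hn') (hmem 0 ⟨le_rfl, hT⟩)
  have hcos : Real.cos (2 * Real.pi * n) = 1 := by
    rw [mul_comm]
    exact Real.cos_nat_mul_two_pi n
  rw [key _ hn', hcos]
  ring
end
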